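/- Let G be a group acting on ℝ such that for every g ∈ G the map t ↦ g·t is a strictly increasing bijection of ℝ. Define m : G → ℝ by m(g) = 1 if g·0 > 0 and m(g) = 0 otherwise. Then for all g, h ∈ G with h·0 ≠ 0, one has m(g⁻¹)·m(g⁻¹h) = m(h)·m(g⁻¹) + m(h⁻¹)·m(g⁻¹h). -/

import Mathlib

/-- Combinatorial core of the Cotlar-type identity: if a group `G` acts on `ℝ` by strictly
increasing bijections and `m` is the indicator of `{g : g • 0 > 0}`, then for `h • 0 ≠ 0`
one has `m(g⁻¹) m(g⁻¹h) = m(h) m(g⁻¹) + m(h⁻¹) m(g⁻¹h)`. -/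
theorem stmt_7 (G : Type*) [Group G] [MulAction G ℝ]
    (hmono : ∀ g : G, StrictMono (fun t : ℝ => g • t))
    (m : G → ℝ)
    (hm : ∀ g : G, m g = if 0 < g • (0 : ℝ) then 1 else 0) :
    ∀ g h : G, h • (0 : ℝ) ≠ 0 →
      m g⁻¹ * m (g⁻¹ * h) = m h * m g⁻¹ + m h⁻¹ * m (g⁻¹ * h) := by
  intro g h hh
  have key : ∀ (k : G) (t : ℝ), 0 < k⁻¹ • t ↔ k • (0 : ℝ) < t := by
    intro k t
    have h1 := (hmono k).lt_iff_lt (a := 0) (b := k⁻¹ • t)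
    simp only [smul_inv_smul] at h1
    exact h1.symm
  simp only [hm, mul_smul, key]
  rcases lt_or_gt_of_ne hh with hb | hb
  · by_cases h1 : g • (0 : ℝ) < h • (0 : ℝ)
    · simp [h1, hb, hb.le, h1.trans hb]
    · simp [h1, hb.not_gt]
  · by_cases h1 : g • (0 : ℝ) < 0
    · simp [h1, hb, hb.not_gt, h1.trans hb]
    · simp [h1, hb.not_gt]
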